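/- (Proposition 2, conditional form.) Let α > 0, k > 0, ε > 0, δ > 0, g_min > 0 and g_max be real numbers, let K_H, K_s : V → ℝ and φ_H, φ_s : D → V. Assume: (a) E[d ↦ |K_H (φ_H d) − K* (φ* d)|] ≤ E[d ↦ |K_s (φ_s d) − K* (φ* d)|] − ε/(α·k); (b) E[d ↦ |K_H (φ_H d) − K* (φ_H d)|] < δ and E[d ↦ |K_s (φ_s d) − K* (φ_s d)|] < δ; (c) g_min · E[d ↦ ‖φ_H d − φ* d‖] < E[d ↦ |K* (φ_H d) − K* (φ* d)|] and E[d ↦ |K* (φ_s d) − K* (φ* d)|] < g_max · E[d ↦ ‖φ_s d − φ* d‖]. Then g_min · E[d ↦ ‖φ_H d − φ* d‖ − ‖φ_s d − φ* d‖] < (g_max − g_min) · E[d ↦ ‖φ_s d − φ* d‖] + 2δ − ε/(α·k). -/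

import Mathlib

/-- Expectation of `f` under weights `p` on a finite type. -/
noncomputable def Exp {D : Type*} [Fintype D] (p : D → ℝ) (f : D → ℝ) : ℝ :=
  ∑ d, p d * f d

theorem Exp_abs_tri {D : Type*} [Fintype D] (p : D → ℝ) (hp : ∀ d, 0 ≤ p d)
    (f g h : D → ℝ) (H : ∀ d, f d ≤ g d + h d) : Exp p f ≤ Exp p g + Exp p h := by
  unfold Exp
  rw [← Finset.sum_add_distrib]
  refine Finset.sum_le_sum fun d _ => ?_
  rw [← mul_add]
  exact mul_le_mul_of_nonneg_left (H d) (hp d)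

/-- Proposition 2, conditional form: under the linearized Proposition-1 gap,
the small-disturbance assumption, and the two-sided local Lipschitz bounds on `K*`, the
hybrid-trained preference map's error is bounded relative to the reward-only one. -/
theorem prop2_conditional {D V : Type*} [Fintype D] [Nonempty D]
    [NormedAddCommGroup V] [NormedSpace ℝ V]
    (p : D → ℝ) (hp : ∀ d, 0 ≤ p d) (hp1 : ∑ d, p d = 1)
    (φstar : D → V) (Kstar : V → ℝ)
    (α k ε δ gmin gmax : ℝ)
    (hα : 0 < α) (hk : 0 < k) (hε : 0 < ε) (hδ : 0 < δ) (hgmin : 0 < gmin)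
    (KH Ks : V → ℝ) (φH φs : D → V)
    (ha : Exp p (fun d => |KH (φH d) - Kstar (φstar d)|) ≤
      Exp p (fun d => |Ks (φs d) - Kstar (φstar d)|) - ε / (α * k))
    (hb1 : Exp p (fun d => |KH (φH d) - Kstar (φH d)|) < δ)
    (hb2 : Exp p (fun d => |Ks (φs d) - Kstar (φs d)|) < δ)
    (hc1 : gmin * Exp p (fun d => ‖φH d - φstar d‖) <
      Exp p (fun d => |Kstar (φH d) - Kstar (φstar d)|))
    (hc2 : Exp p (fun d => |Kstar (φs d) - Kstar (φstar d)|) <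
      gmax * Exp p (fun d => ‖φs d - φstar d‖)) :
    gmin * Exp p (fun d => ‖φH d - φstar d‖ - ‖φs d - φstar d‖) <
      (gmax - gmin) * Exp p (fun d => ‖φs d - φstar d‖) + 2 * δ - ε / (α * k) := by
  have h1 := Exp_abs_tri p hp (fun d => |Kstar (φH d) - Kstar (φstar d)|)
    (fun d => |KH (φH d) - Kstar (φH d)|) (fun d => |KH (φH d) - Kstar (φstar d)|)
    (fun d => by
      have := abs_sub_le (Kstar (φH d)) (KH (φH d)) (Kstar (φstar d))
      rwa [abs_sub_comm (Kstar (φH d)) (KH (φH d))] at this)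
  have h2 := Exp_abs_tri p hp (fun d => |Ks (φs d) - Kstar (φstar d)|)
    (fun d => |Ks (φs d) - Kstar (φs d)|) (fun d => |Kstar (φs d) - Kstar (φstar d)|)
    (fun d => abs_sub_le _ _ _)
  have h3 : Exp p (fun d => ‖φH d - φstar d‖ - ‖φs d - φstar d‖) =
      Exp p (fun d => ‖φH d - φstar d‖) - Exp p (fun d => ‖φs d - φstar d‖) := by
    simp only [Exp, mul_sub, Finset.sum_sub_distrib]
  rw [h3, mul_sub, sub_mul]
  linarith
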